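/- arXiv:2506.13531 — 2 statements merged into one kernel-verified Lean document; each statement's English description precedes it below -/
import Mathlib

section
/- Let a : ℝ → ℝ be a continuous function, and define T : ℝ² → ℝ² by T(x) = R(a(‖x‖))·x, where R(θ) is the 2×2 rotation matrix with rows (cos θ, −sin θ) and (sin θ, cos θ). Then the pushforward of the standard Gaussian measure on ℝ² under T equals the standard Gaussian measure on ℝ². -/
open MeasureTheory ProbabilityTheory Matrix

/-!
A measure that is invariant under a compact group `G` equals its own average over the Haar
probability measure of `G`. If `h x ∈ G` depends only on the orbit of `x`, then on that orbit
`x ↦ h x • x` acts by one fixed group element, which left invariance of the Haar measure absorbs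
into the average. The theorem is the case of the circle acting on the standard Gaussian of
`ℂ ≃ ℝ²`: the radius is constant on orbits, hence so is any angle depending on it.
-/

section OrbitwiseAction

variable {M X : Type*} [MeasurableSpace M] [MeasurableSpace X]

theorem lintegral_eq_lintegral_lintegral_smul [SMul M X] [MeasurableSMul₂ M X] (ν : Measure M)
    [IsProbabilityMeasure ν] (μ : Measure X) [SFinite μ] [SMulInvariantMeasure M X μ]
    {f : X → ENNReal} (hf : Measurable f) :
    ∫⁻ x, f x ∂μ = ∫⁻ x, ∫⁻ g, f (g • x) ∂ν ∂μ := by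
  rw [lintegral_lintegral_swap (by fun_prop)]
  simp only [(measurePreserving_smul _ μ).lintegral_comp hf, lintegral_const, measure_univ,
    mul_one]

theorem measurePreserving_smul_of_smul_invariant [Monoid M] [MeasurableMul M] [MulAction M X]
    [MeasurableSMul₂ M X] (ν : Measure M) [IsProbabilityMeasure ν] [ν.IsMulLeftInvariant]
    (μ : Measure X) [SFinite μ] [SMulInvariantMeasure M X μ]
    {h : X → M} (hh : Measurable h) (h_smul : ∀ (g : M) (x : X), h (g • x) = h x) :
    MeasurePreserving (fun x => h x • x) μ μ := by
  have hT : Measurable fun x => h x • x := hh.smul measurable_id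
  refine ⟨hT, Measure.ext_of_lintegral _ fun f hf => ?_⟩
  have translate (x : X) : ∫⁻ g, f ((h x * g) • x) ∂ν = ∫⁻ g, f (g • x) ∂ν :=
    (measurePreserving_mul_left ν (h x)).lintegral_comp (f := fun g => f (g • x)) (by fun_prop)
  calc ∫⁻ x, f x ∂μ.map (fun x => h x • x)
    _ = ∫⁻ x, f (h x • x) ∂μ := lintegral_map hf hT
    _ = ∫⁻ x, ∫⁻ g, f (h (g • x) • g • x) ∂ν ∂μ :=
        lintegral_eq_lintegral_lintegral_smul ν μ (hf.comp hT)
    _ = ∫⁻ x, ∫⁻ g, f (g • x) ∂ν ∂μ := by simp only [h_smul, smul_smul, translate]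
    _ = ∫⁻ x, f x ∂μ := (lintegral_eq_lintegral_lintegral_smul ν μ hf).symm

end OrbitwiseAction

section StdGaussian

variable {E : Type*} [NormedAddCommGroup E] [InnerProductSpace ℝ E] [FiniteDimensional ℝ E]
  [MeasurableSpace E] [BorelSpace E]

theorem smulInvariantMeasure_stdGaussian {G : Type*} [Group G] [DistribMulAction G E]
    [SMulCommClass G ℝ E] (h_norm : ∀ (g : G) (x : E), ‖g • x‖ = ‖x‖) :
    SMulInvariantMeasure G E (stdGaussian E) := by
  refine ⟨fun g s hs => ?_⟩
  let e : E ≃ₗᵢ[ℝ] E := ⟨DistribMulAction.toLinearEquiv ℝ E g, h_norm g⟩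
  have he : MeasurePreserving e (stdGaussian E) (stdGaussian E) :=
    ⟨e.continuous.measurable, stdGaussian_map e⟩
  exact he.measure_preimage hs.nullMeasurableSet

theorem measurePreserving_norm_smul_stdGaussian {G : Type*} [Group G] [TopologicalSpace G]
    [IsTopologicalGroup G] [CompactSpace G] [MeasurableSpace G] [BorelSpace G]
    [DistribMulAction G E] [SMulCommClass G ℝ E] [MeasurableSMul₂ G E]
    (h_norm : ∀ (g : G) (x : E), ‖g • x‖ = ‖x‖) {c : ℝ → G} (hc : Measurable c) :
    MeasurePreserving (fun x : E => c ‖x‖ • x) (stdGaussian E) (stdGaussian E) := by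
  have := smulInvariantMeasure_stdGaussian h_norm
  let ν : Measure G := Measure.haarMeasure ⊤
  have : IsProbabilityMeasure ν := ⟨Measure.haarMeasure_self⟩
  exact measurePreserving_smul_of_smul_invariant ν (stdGaussian E) (hc.comp measurable_norm)
    fun g x => congrArg c (h_norm g x)

theorem measurePreserving_orthonormalBasis_repr_stdGaussian {ι : Type*} [Fintype ι]
    (b : OrthonormalBasis ι ℝ E) :
    MeasurePreserving (fun x i => b.repr x i) (stdGaussian E)
      (Measure.pi fun _ : ι => gaussianReal 0 1) := by
  refine ⟨by fun_prop, ?_⟩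
  rw [stdGaussian_eq_map_pi_orthonormalBasis b, Measure.map_map (by fun_prop) (by fun_prop)]
  have repr_sum : (fun y i => b.repr y i) ∘ (fun x : ι → ℝ => ∑ i, x i • b i) = id := by
    ext x i
    simp [b.repr_apply_apply, b.orthonormal.inner_right_fintype]
  rw [repr_sum, Measure.map_id]

end StdGaussian

theorem measurePreserving_measurableEquivPi_stdGaussian :
    MeasurePreserving Complex.measurableEquivPi (stdGaussian ℂ)
      (Measure.pi fun _ : Fin 2 => gaussianReal 0 1) := by
  have coords : ⇑Complex.measurableEquivPi = fun z i => Complex.orthonormalBasisOneI.repr z i := by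
    ext z i
    simp
  rw [coords]
  exact measurePreserving_orthonormalBasis_repr_stdGaussian Complex.orthonormalBasisOneI

theorem measurableEquivPi_circleExp_smul (θ : ℝ) (z : ℂ) :
    Complex.measurableEquivPi (Circle.exp θ • z) =
      !![Real.cos θ, -Real.sin θ; Real.sin θ, Real.cos θ] *ᵥ Complex.measurableEquivPi z := by
  have re_eq : (Circle.exp θ • z).re = Real.cos θ * z.re - Real.sin θ * z.im := by
    simp [Circle.smul_def, Complex.exp_ofReal_mul_I_re, Complex.exp_ofReal_mul_I_im]
  have im_eq : (Circle.exp θ • z).im = Real.sin θ * z.re + Real.cos θ * z.im := by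
    simp [Circle.smul_def, Complex.exp_ofReal_mul_I_re, Complex.exp_ofReal_mul_I_im, add_comm]
  ext i
  fin_cases i <;> simp [re_eq, im_eq, sub_eq_add_neg, vecHead, vecTail, mul_comm]

theorem stmt_8_general (a : ℝ → ℝ) (ha : Measurable a)
    (R : ℝ → Matrix (Fin 2) (Fin 2) ℝ)
    (hR : ∀ θ, R θ = !![Real.cos θ, -Real.sin θ; Real.sin θ, Real.cos θ]) :
    (Measure.pi (fun _ : Fin 2 => gaussianReal 0 1)).map
        (fun x : Fin 2 → ℝ => (R (a (Real.sqrt (x 0 ^ 2 + x 1 ^ 2)))).mulVec x)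
      = Measure.pi (fun _ : Fin 2 => gaussianReal 0 1) := by
  borelize Circle
  let e := Complex.measurableEquivPi
  let S : ℂ → ℂ := fun z => Circle.exp (a ‖z‖) • z
  have he : MeasurePreserving e (stdGaussian ℂ) (Measure.pi fun _ => gaussianReal 0 1) :=
    measurePreserving_measurableEquivPi_stdGaussian
  have hS : MeasurePreserving S (stdGaussian ℂ) (stdGaussian ℂ) :=
    measurePreserving_norm_smul_stdGaussian Circle.norm_smul
      (Circle.exp.continuous.measurable.comp ha)
  have h_conj : (fun x : Fin 2 → ℝ => R (a √(x 0 ^ 2 + x 1 ^ 2)) *ᵥ x) = e ∘ S ∘ e.symm := by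
    funext x
    obtain ⟨z, rfl⟩ := e.surjective x
    have norm_eq : √(e z 0 ^ 2 + e z 1 ^ 2) = ‖z‖ := (Complex.norm_eq_sqrt_sq_add_sq z).symm
    rw [norm_eq, hR, ← measurableEquivPi_circleExp_smul, Function.comp_apply,
      Function.comp_apply, e.symm_apply_apply]
  rw [h_conj]
  exact (he.comp (hS.comp (he.symm e))).map_eq

/-- Rotation by an angle depending on the distance to the origin preserves the
standard bivariate Gaussian measure: for continuous `a : ℝ → ℝ` and
`T x = R (a ‖x‖) x`, with `R θ` the 2×2 rotation matrix and `‖x‖` the Euclidean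
norm `√(x₀² + x₁²)`, the pushforward of the standard Gaussian measure on `ℝ²`
(the 2-fold product of `N(0,1)`) under `T` is the standard Gaussian measure. -/
theorem stmt_8 (a : ℝ → ℝ) (ha : Continuous a)
    (R : ℝ → Matrix (Fin 2) (Fin 2) ℝ)
    (hR : ∀ θ, R θ = !![Real.cos θ, -Real.sin θ; Real.sin θ, Real.cos θ]) :
    (Measure.pi (fun _ : Fin 2 => gaussianReal 0 1)).map
        (fun x : Fin 2 → ℝ => (R (a (Real.sqrt (x 0 ^ 2 + x 1 ^ 2)))).mulVec x)
      = Measure.pi (fun _ : Fin 2 => gaussianReal 0 1) :=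
  stmt_8_general a ha.measurable R hR
end

section
/- Let Φ denote the cumulative distribution function of the standard normal distribution N(0,1), let Φ̃ : ℝⁿ → (0,1)ⁿ apply Φ coordinatewise, and let Q : ℝ → Matrix(n,n,ℝ) be a continuous function such that for every r ∈ ℝ the matrix Q(r) is orthogonal (Q(r)Q(r)ᵀ = Id) with det Q(r) = 1. Then the map u ↦ Φ̃( Q(‖Φ̃⁻¹(u)‖²)·Φ̃⁻¹(u) ) from (0,1)ⁿ to (0,1)ⁿ preserves the uniform probability measure on (0,1)ⁿ, i.e., its pushforward of the uniform measure on (0,1)ⁿ equals the uniform measure on (0,1)ⁿ. -/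
open MeasureTheory ProbabilityTheory Matrix

/-!
A rotation with constant matrix preserves both the standard Gaussian measure and the norm. If the
matrix is a simple function of the norm, then the rotation maps each of the finitely many pieces on
which the matrix is constant into itself, so it still preserves the Gaussian measure. A general
rotation is a pointwise limit of such ones, and weak limits of laws are unique. The coordinatewise
normal cdf carries the Gaussian measure to the uniform measure on the cube, by the probability
integral transform, and conjugates one map into the other.
-/

section ProbabilityIntegralTransform

variable (μ : Measure ℝ) [IsProbabilityMeasure μ] [NullSingletonClass μ]

lemma continuous_cdf : Continuous (cdf μ) := by
  refine continuous_iff_continuousAt.2 fun x => ?_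
  rw [(monotone_cdf μ).continuousAt_iff_leftLim_eq_rightLim, StieltjesFunction.rightLim_eq]
  have hjump : ENNReal.ofReal (cdf μ x - Function.leftLim (cdf μ) x) = 0 := by
    rw [← StieltjesFunction.measure_singleton, measure_cdf, measure_singleton]
  exact le_antisymm ((monotone_cdf μ).leftLim_le le_rfl)
    (sub_nonpos.1 (ENNReal.ofReal_eq_zero.1 hjump))

lemma measure_cdf_le_of_lt_one {a : ℝ} (ha : a < 1) :
    μ {x | cdf μ x ≤ a} = ENNReal.ofReal a := by
  obtain ⟨c, hc⟩ := ((tendsto_cdf_atTop μ).eventually_const_lt ha).exists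
  rcases Set.eq_empty_or_nonempty {x | cdf μ x ≤ a} with hempty | hne
  · have ha_nonpos : a ≤ 0 := by
      by_contra! hpos
      obtain ⟨x, hx⟩ := ((tendsto_cdf_atBot μ).eventually_le_const hpos).exists
      exact (hempty ▸ hx : x ∈ (∅ : Set ℝ))
    rw [hempty, measure_empty, ENNReal.ofReal_of_nonpos ha_nonpos]
  · have hbdd : BddAbove {x | cdf μ x ≤ a} :=
      ⟨c, fun x hx => ((monotone_cdf μ).reflect_lt (hx.trans_lt hc)).le⟩
    have hclosed : IsClosed {x | cdf μ x ≤ a} := isClosed_le (continuous_cdf μ) continuous_const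
    obtain ⟨b, hb, hb_max⟩ : ∃ b, IsGreatest {x | cdf μ x ≤ a} b :=
      ⟨_, hclosed.isGreatest_csSup hne hbdd⟩
    obtain ⟨d, rfl⟩ : ∃ d, cdf μ d = a :=
      mem_range_of_exists_le_of_exists_ge (continuous_cdf μ) hne ⟨c, hc.le⟩
    have hb_eq : cdf μ b = cdf μ d := le_antisymm hb (monotone_cdf μ (hb_max (le_refl (cdf μ d))))
    have hset : {x | cdf μ x ≤ cdf μ d} = Set.Iic b :=
      Set.Subset.antisymm (fun x hx => hb_max hx) fun x hx => (monotone_cdf μ hx).trans hb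
    rw [hset, ← hb_eq, ofReal_cdf]

lemma measurePreserving_cdf :
    MeasurePreserving (cdf μ) μ (volume.restrict (Set.Ioo 0 1)) := by
  have hmeas : Measurable (cdf μ) := (continuous_cdf μ).measurable
  have : IsFiniteMeasure (μ.map (cdf μ)) := Measure.isFiniteMeasure_map _ _
  refine ⟨hmeas, Measure.ext_of_Iic _ _ fun a => ?_⟩
  rw [Measure.map_apply hmeas measurableSet_Iic, restrict_Ioo_eq_restrict_Ioc,
    Measure.restrict_apply measurableSet_Iic, Set.inter_comm, Set.Ioc_inter_Iic, Real.volume_Ioc,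
    sub_zero]
  rcases lt_or_ge a 1 with ha | ha
  · rw [inf_eq_right.2 ha.le]
    exact measure_cdf_le_of_lt_one μ ha
  · have huniv : cdf μ ⁻¹' Set.Iic a = Set.univ :=
      Set.eq_univ_of_forall fun x => (cdf_le_one μ x).trans ha
    rw [huniv, inf_eq_left.2 ha, measure_univ, ENNReal.ofReal_one]

end ProbabilityIntegralTransform

section MeasurePreserving

variable {α β κ : Type*} [MeasurableSpace α] [MeasurableSpace β] {μ : Measure α} {ν : Measure β}

lemma measurePreserving_simpleFunc_of_invariant {L : SimpleFunc α κ} {g : κ → α → α}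
    (hg : ∀ k, MeasurePreserving (g k) μ μ) (hL : ∀ k x, L (g k x) = L x) :
    MeasurePreserving (fun x => g (L x) x) μ μ := by
  have hmeas : Measurable fun x => g (L x) x := L.measurable_bind g fun k => (hg k).measurable
  have hsum : ∀ T, μ T = ∑ k ∈ L.range, μ (L ⁻¹' {k} ∩ T) := fun T => by
    rw [← Measure.restrict_apply_univ, ← L.sum_range_measure_preimage_singleton]
    exact Finset.sum_congr rfl fun k _ => Measure.restrict_apply (L.measurableSet_fiber k)
  have hpiece : ∀ k S, L ⁻¹' {k} ∩ (fun x => g (L x) x) ⁻¹' S = g k ⁻¹' (L ⁻¹' {k} ∩ S) := by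
    intro k S
    ext x
    simp +contextual [hL]
  refine ⟨hmeas, Measure.ext fun S hS => ?_⟩
  rw [Measure.map_apply hmeas hS, hsum, hsum S]
  refine Finset.sum_congr rfl fun k _ => ?_
  rw [hpiece, (hg k).measure_preimage ((L.measurableSet_fiber k).inter hS).nullMeasurableSet]

lemma measurePreserving_of_tendsto [TopologicalSpace β] [TopologicalSpace.PseudoMetrizableSpace β]
    [BorelSpace β] [IsProbabilityMeasure μ] [IsProbabilityMeasure ν] {F : ℕ → α → β} {G : α → β}
    (hF : ∀ m, MeasurePreserving (F m) μ ν)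
    (hlim : ∀ x, Filter.Tendsto (fun m => F m x) Filter.atTop (nhds (G x))) :
    MeasurePreserving G μ ν := by
  have hG : Measurable G :=
    measurable_of_tendsto_metrizable (fun m => (hF m).measurable) (tendsto_pi_nhds.2 hlim)
  have hF_ident : ∀ m, IdentDistrib (F m) id μ ν := fun m =>
    ⟨(hF m).aemeasurable, aemeasurable_id, by rw [(hF m).map_eq, Measure.map_id]⟩
  have hto_G : TendstoInDistribution F Filter.atTop G (fun _ => μ) μ :=
    tendstoInDistribution_of_ae_tendsto (fun m => (hF m).aemeasurable) hG.aemeasurable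
      (Filter.Eventually.of_forall hlim)
  have hto_id : TendstoInDistribution F Filter.atTop id (fun _ => μ) ν :=
    tendstoInDistribution_of_identDistrib 0 (fun m => (hF_ident 0).trans (hF_ident m).symm)
      (hF_ident 0)
  exact ⟨hG, (tendstoInDistribution_unique F hto_G hto_id).trans Measure.map_id⟩

lemma measurePreserving_of_stronglyMeasurable_of_invariant [TopologicalSpace α]
    [TopologicalSpace.PseudoMetrizableSpace α] [BorelSpace α] [IsProbabilityMeasure μ]
    [TopologicalSpace κ] {N : α → β} (hN : Measurable N) {K : β → κ} (hK : StronglyMeasurable K)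
    {g : κ → α → α} (hg : ∀ k, MeasurePreserving (g k) μ μ) (hgN : ∀ k x, N (g k x) = N x)
    (hcont : ∀ x, Continuous fun k => g k x) :
    MeasurePreserving (fun x => g (K (N x)) x) μ μ := by
  refine measurePreserving_of_tendsto (F := fun m x => g (hK.approx m (N x)) x) (fun m => ?_)
    fun x => ((hcont x).tendsto _).comp (hK.tendsto_approx (N x))
  exact measurePreserving_simpleFunc_of_invariant (L := (hK.approx m).comp N hN) hg
    fun k x => congrArg (hK.approx m) (hgN k x)

lemma map_eq_self_of_semiconj {e : α → β} (he : MeasurableEmbedding e)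
    (heμ : MeasurePreserving e μ ν) {T : α → α} (hT : MeasurePreserving T μ μ) {S : β → β}
    (hS : Function.Semiconj e T S) : ν.map S = ν := by
  have hS_ae : AEMeasurable S (μ.map e) := by
    rw [he.aemeasurable_map_iff, ← hS.comp_eq]
    exact (heμ.comp hT).aemeasurable
  rw [← heμ.map_eq, AEMeasurable.map_map_of_aemeasurable hS_ae heμ.aemeasurable, ← hS.comp_eq,
    (heμ.comp hT).map_eq, heμ.map_eq]

end MeasurePreserving

section GaussianRotation

variable {ι : Type*} [Fintype ι] [DecidableEq ι]

lemma mulVec_dotProduct_mulVec_of_mem_orthogonalGroup {R : Type*} [CommRing R] {A : Matrix ι ι R}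
    (hA : A ∈ orthogonalGroup ι R) (x y : ι → R) : (A *ᵥ x) ⬝ᵥ (A *ᵥ y) = x ⬝ᵥ y := by
  rw [dotProduct_mulVec, vecMul_mulVec, (mem_orthogonalGroup_iff' ι R).1 hA, vecMul_one]

lemma measurePreserving_mulVec_pi_gaussianReal {A : Matrix ι ι ℝ} (hA : A ∈ orthogonalGroup ι ℝ) :
    MeasurePreserving (fun x : ι → ℝ => A *ᵥ x)
      (Measure.pi fun _ => gaussianReal 0 1) (Measure.pi fun _ => gaussianReal 0 1) := by
  have hunitary : A ∈ unitary (Matrix ι ι ℝ) := mem_unitaryGroup_iff.2 <| by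
    rw [star_eq_conjTranspose, conjTranspose_eq_transpose_of_trivial]
    exact (mem_orthogonalGroup_iff ι ℝ).1 hA
  let e : EuclideanSpace ℝ ι ≃ₗᵢ[ℝ] EuclideanSpace ℝ ι :=
    Unitary.linearIsometryEquiv ⟨toEuclideanCLM (𝕜 := ℝ) A, Unitary.map_mem _ hunitary⟩
  have he : MeasurePreserving e (stdGaussian _) (stdGaussian _) :=
    ⟨e.continuous.measurable, stdGaussian_map e⟩
  have htoLp : MeasurePreserving (MeasurableEquiv.toLp 2 (ι → ℝ))
      (Measure.pi fun _ => gaussianReal 0 1) (stdGaussian _) :=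
    ⟨MeasurableEquiv.measurable _, map_pi_eq_stdGaussian⟩
  exact htoLp.symm.comp (he.comp htoLp)

lemma measurePreserving_normDependent_mulVec_pi_gaussianReal {Q : ℝ → Matrix ι ι ℝ}
    (hQmeas : ∀ i j, Measurable fun r => Q r i j) (hQorth : ∀ r, Q r ∈ orthogonalGroup ι ℝ) :
    MeasurePreserving (fun x : ι → ℝ => Q (x ⬝ᵥ x) *ᵥ x)
      (Measure.pi fun _ => gaussianReal 0 1) (Measure.pi fun _ => gaussianReal 0 1) := by
  have : TopologicalSpace.PseudoMetrizableSpace (Matrix ι ι ℝ) :=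
    inferInstanceAs (TopologicalSpace.PseudoMetrizableSpace (ι → ι → ℝ))
  have hval : Topology.IsEmbedding ((↑) : orthogonalGroup ι ℝ → Matrix ι ι ℝ) :=
    Topology.IsEmbedding.subtypeVal
  have : TopologicalSpace.PseudoMetrizableSpace (orthogonalGroup ι ℝ) :=
    hval.isInducing.pseudoMetrizableSpace
  have hQ : StronglyMeasurable (β := ι → ι → ℝ) Q :=
    (measurable_pi_iff.2 fun i => measurable_pi_iff.2 (hQmeas i)).stronglyMeasurable
  have hK : StronglyMeasurable fun r => (⟨Q r, hQorth r⟩ : orthogonalGroup ι ℝ) :=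
    (Embedding.comp_stronglyMeasurable_iff hval).1 hQ
  exact measurePreserving_of_stronglyMeasurable_of_invariant
    (N := fun x : ι → ℝ => x ⬝ᵥ x) (g := fun (A : orthogonalGroup ι ℝ) x => A.1 *ᵥ x)
    (by unfold dotProduct; fun_prop) hK
    (fun A => measurePreserving_mulVec_pi_gaussianReal A.2)
    (fun A x => mulVec_dotProduct_mulVec_of_mem_orthogonalGroup A.2 x x)
    fun x => continuous_subtype_val.matrix_mulVec continuous_const

end GaussianRotation

theorem stmt_9_general {ι : Type*} [Fintype ι] [DecidableEq ι]
    (Φ : ℝ → ℝ) (hΦ : ∀ x, Φ x = ((gaussianReal 0 1) (Set.Iic x)).toReal)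
    (Φinv : ℝ → ℝ) (hΦinv : ∀ x, Φinv (Φ x) = x)
    (Q : ℝ → Matrix ι ι ℝ) (hQmeas : ∀ i j, Measurable fun r => Q r i j)
    (hQorth : ∀ r, Q r * (Q r)ᵀ = 1) :
    (volume.restrict (Set.univ.pi fun _ : ι => Set.Ioo (0 : ℝ) 1)).map
        (fun u : ι → ℝ => fun i =>
          Φ ((Q (∑ j, (Φinv (u j)) ^ 2)).mulVec (fun j => Φinv (u j)) i))
      = volume.restrict (Set.univ.pi fun _ : ι => Set.Ioo (0 : ℝ) 1) := by
  have : NullSingletonClass (gaussianReal 0 1) := nullSingletonClass_gaussianReal one_ne_zero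
  obtain rfl : Φ = cdf (gaussianReal 0 1) := funext fun x => by
    rw [hΦ, cdf_eq_real, Measure.real]
  have hemb : MeasurableEmbedding fun (x : ι → ℝ) i => cdf (gaussianReal 0 1) (x i) :=
    (continuous_pi fun i => (continuous_cdf _).comp (continuous_apply i)).measurableEmbedding
      (Function.LeftInverse.injective hΦinv).comp_left
  have huniform : MeasurePreserving (fun (x : ι → ℝ) i => cdf (gaussianReal 0 1) (x i))
      (Measure.pi fun _ => gaussianReal 0 1)
      (volume.restrict (Set.univ.pi fun _ : ι => Set.Ioo (0 : ℝ) 1)) := by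
    rw [volume_pi, Measure.restrict_pi_pi]
    exact measurePreserving_pi _ _ fun _ => measurePreserving_cdf _
  have hrot := measurePreserving_normDependent_mulVec_pi_gaussianReal hQmeas
    fun r => (mem_orthogonalGroup_iff ι ℝ).2 (hQorth r)
  refine map_eq_self_of_semiconj hemb huniform hrot fun x => ?_
  simp only [hΦinv, dotProduct, sq]

/-- Corollary 3: conjugating a norm-dependent special orthogonal rotation by the
coordinatewise standard normal cdf `Φ` (with quantile function `Φinv`) yields a
transformation of `(0,1)ⁿ` preserving the uniform probability measure on
`(0,1)ⁿ`. -/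
theorem stmt_9 (n : ℕ)
    (Φ : ℝ → ℝ) (hΦ : ∀ x, Φ x = ((gaussianReal 0 1) (Set.Iic x)).toReal)
    (Φinv : ℝ → ℝ) (hΦinv : ∀ x, Φinv (Φ x) = x)
    (Q : ℝ → Matrix (Fin n) (Fin n) ℝ) (hQcont : Continuous Q)
    (hQorth : ∀ r, Q r * (Q r)ᵀ = 1) (hQdet : ∀ r, (Q r).det = 1) :
    (volume.restrict (Set.univ.pi fun _ : Fin n => Set.Ioo (0 : ℝ) 1)).map
        (fun u : Fin n → ℝ => fun i =>
          Φ ((Q (∑ j, (Φinv (u j)) ^ 2)).mulVec (fun j => Φinv (u j)) i))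
      = volume.restrict (Set.univ.pi fun _ : Fin n => Set.Ioo (0 : ℝ) 1) :=
  stmt_9_general Φ hΦ Φinv hΦinv Q (fun i j => (hQcont.matrix_elem i j).measurable) hQorth
end
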